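/- Every finitely generated free abelian group Λ equipped with an involution σ decomposes as a direct sum of Z/2-submodules, each isomorphic to one of three indecomposable types: the trivial module Z (σ = id), the sign module Z₋ (σ = -id), or the regular module R = Z² with σ(x,y) = (y,x). -/

import Mathlib

/-!
If `x + σ x` is always divisible by `2`, then `Λ` is the direct sum of the `±1`-eigenspaces of `σ`.
Otherwise pick `x` with `x + σ x ∉ 2Λ`. Dividing `x + σ x` and `x - σ x` by their contents, which
are odd, and correcting `x` accordingly makes both vectors primitive. Functionals `g`, `h` taking
the value `1` on them combine to a functional `f` with `f x = 1` and `f (σ x) = 0`; then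
`y ↦ (f y, f (σ y))` is an equivariant retraction onto the regular summand spanned by `x` and
`σ x`, and its kernel has smaller rank.
-/

open Module

section CommRing

variable {R M : Type*} [CommRing R] [AddCommGroup M] [Module R M]

/-- Up to isomorphism, `σ` is a direct sum of `t` copies of the trivial module `R`, `c` copies of
the sign module `R₋` and `r` copies of the regular module `R²` with its coordinates swapped, where
any of `t`, `c`, `r` may be `0`. -/
def HasStandardForm (σ : End R M) : Prop :=
  ∃ (t c r : ℕ) (e : M ≃ₗ[R] (Fin t → R) × (Fin c → R) × (Fin r → R × R)),
    ∀ x, e (σ x) = ((e x).1, -(e x).2.1, fun i => ((e x).2.2 i).swap)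

theorem HasStandardForm.of_swap_prod {N : Type*} [AddCommGroup N] [Module R N]
    {σ : End R M} {τ : End R N} (hτ : HasStandardForm τ) (e : M ≃ₗ[R] (R × R) × N)
    (he : ∀ x, e (σ x) = ((e x).1.swap, τ (e x).2)) : HasStandardForm σ := by
  obtain ⟨t, c, r, e', he'⟩ := hτ
  let cons : ((R × R) × (Fin r → R × R)) ≃ₗ[R] (Fin (r + 1) → R × R) :=
    Fin.consLinearEquiv R fun _ => R × R
  let shuffle : ((R × R) × (Fin t → R) × (Fin c → R) × (Fin r → R × R)) ≃ₗ[R]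
      (Fin t → R) × (Fin c → R) × (R × R) × (Fin r → R × R) :=
    (LinearEquiv.prodComm R _ _).trans <| (LinearEquiv.prodAssoc R _ _ _).trans <|
      (LinearEquiv.refl R _).prodCongr <| (LinearEquiv.prodAssoc R _ _ _).trans <|
      (LinearEquiv.refl R _).prodCongr <| LinearEquiv.prodComm R _ _
  refine ⟨t, c, r + 1, e.trans <| ((LinearEquiv.refl R _).prodCongr e').trans <|
    shuffle.trans <| (LinearEquiv.refl R _).prodCongr <| (LinearEquiv.refl R _).prodCongr cons,
    fun x => ?_⟩
  ext i
  · simp [shuffle, he, he']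
  · simp [shuffle, he, he']
  all_goals
    cases i using Fin.cases <;> simp [shuffle, cons, he, he']

theorem map_mem_ker_of_semiconj {P : Type*} [AddCommGroup P] [Module R P] {σ : End R M}
    {ρ : End R P} {π : M →ₗ[R] P} (hπ : Function.Semiconj π σ ρ) :
    ∀ x ∈ LinearMap.ker π, σ x ∈ LinearMap.ker π := fun x hx => by
  rw [LinearMap.mem_ker, hπ.eq, LinearMap.mem_ker.1 hx, map_zero]

theorem exists_equivariant_linearEquiv_prod_ker {P : Type*} [AddCommGroup P] [Module R P]
    {σ : End R M} {ρ : End R P} {π : M →ₗ[R] P} {s : P →ₗ[R] M}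
    (hπ : Function.Semiconj π σ ρ) (hs : Function.Semiconj s ρ σ)
    (hπs : Function.LeftInverse π s) :
    ∃ e : M ≃ₗ[R] P × LinearMap.ker π, ∀ x, e (σ x) =
      (ρ (e x).1, σ.restrict (map_mem_ker_of_semiconj hπ) (e x).2) := by
  let residual : M →ₗ[R] LinearMap.ker π :=
    (LinearMap.id - s ∘ₗ π).codRestrict _ fun x => by simp [hπs (π x)]
  have residual_apply (x : M) : (residual x : M) = x - s (π x) := rfl
  let e : M ≃ₗ[R] P × LinearMap.ker π :=
    .ofLinearMap (π.prod residual) (s.coprod (LinearMap.ker π).subtype)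
      (by ext <;> simp [residual_apply, hπs _])
      (by ext; simp [residual_apply])
  refine ⟨e, fun x => Prod.ext (hπ x) (Subtype.ext ?_)⟩
  simp [e, residual_apply, hπ.eq, hs.eq]

theorem exists_equivariant_linearEquiv_swap_prod {σ : End R M} (hσ : Function.Involutive σ)
    {f : Dual R M} {z : M} (hz : f z = 1) (hσz : f (σ z) = 0) :
    ∃ (N : Submodule R M) (τ : End R N) (e : M ≃ₗ[R] (R × R) × N),
      Function.Involutive τ ∧ ∀ x, e (σ x) = ((e x).1.swap, τ (e x).2) := by
  let swap : End R (R × R) := (LinearEquiv.prodComm R R R).toLinearMap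
  let π : M →ₗ[R] R × R := f.prod (f ∘ₗ σ)
  let s : R × R →ₗ[R] M :=
    (LinearMap.toSpanSingleton R M z).coprod (LinearMap.toSpanSingleton R M (σ z))
  have hπ : Function.Semiconj π σ swap := fun x => by simp [π, swap, hσ x]
  have hs : Function.Semiconj s swap σ := fun p => by simp [s, swap, hσ z, add_comm]
  have hπs : Function.LeftInverse π s := fun p => by simp [π, s, hz, hσz, hσ z]
  obtain ⟨e, he⟩ := exists_equivariant_linearEquiv_prod_ker hπ hs hπs
  exact ⟨LinearMap.ker π, _, e, fun y => Subtype.ext (hσ y), he⟩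

theorem exists_dual_eq_one_and_apply_eq_zero {σ : End R M} (hσ : Function.Involutive σ)
    {g h : Dual R M} {z : M} (hg : g (z + σ z) = 1) (hh : h (z - σ z) = 1) :
    ∃ f : Dual R M, f z = 1 ∧ f (σ z) = 0 := by
  rw [map_add] at hg
  rw [map_sub] at hh
  refine ⟨g + g (σ z) • (h - h ∘ₗ σ), ?_, ?_⟩ <;>
    simp only [LinearMap.add_apply, LinearMap.smul_apply, LinearMap.sub_apply,
      LinearMap.comp_apply, smul_eq_mul, hσ z]
  · linear_combination hg + g (σ z) * hh
  · linear_combination -g (σ z) * hh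

end CommRing

section Domain

variable {R M : Type*} [CommRing R] [IsDomain R] [AddCommGroup M] [Module R M]

theorem isCompl_eigenspace_one_neg_one [NeZero (2 : R)] [IsTorsionFree R M] {σ : End R M}
    (hσ : Function.Involutive σ) (heven : ∀ x, Even (x + σ x)) :
    IsCompl (σ.eigenspace 1) (σ.eigenspace (-1)) := by
  have one_ne_neg_one : (1 : R) ≠ -1 := fun h =>
    two_ne_zero (by linear_combination h : (2 : R) = 0)
  refine ⟨σ.disjoint_genEigenspace one_ne_neg_one 1 1,
    codisjoint_iff.2 <| eq_top_iff.2 fun x _ => ?_⟩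
  obtain ⟨y, hy⟩ := heven x
  have hσy : σ y = y := by
    apply smul_right_injective M (two_ne_zero (α := R))
    calc (2 : R) • σ y = σ (x + σ x) := by rw [hy, map_add, two_smul]
      _ = x + σ x := by rw [map_add, hσ x, add_comm]
      _ = (2 : R) • y := by rw [hy, two_smul]
  have hy_mem : y ∈ σ.eigenspace 1 := by
    rw [End.mem_eigenspace_iff, hσy, one_smul]
  have hxy_mem : x - y ∈ σ.eigenspace (-1) := by
    rw [End.mem_eigenspace_iff, map_sub, hσy]
    linear_combination (norm := module) hy
  rw [← add_sub_cancel y x]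
  exact Submodule.add_mem_sup hy_mem hxy_mem

end Domain

section PID

variable {R M : Type*} [CommRing R] [IsDomain R] [IsPrincipalIdealRing R]
  [AddCommGroup M] [Module R M] [Module.Free R M]

theorem exists_eq_smul_and_dual_eq_one {x : M} (hx : x ≠ 0) :
    ∃ (m : R) (u : M) (g : Dual R M), x = m • u ∧ g u = 1 := by
  -- The content of `x` is a generator of the ideal of all values of functionals at `x`.
  let values : Ideal R := LinearMap.range (Dual.eval R M x)
  let m := Submodule.IsPrincipal.generator values
  obtain ⟨g, hg⟩ : m ∈ values := Submodule.IsPrincipal.generator_mem values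
  let b := Free.chooseBasis R M
  have dvd_coord : ∀ i, m ∣ b.repr x i := fun i =>
    (Submodule.IsPrincipal.mem_iff_generator_dvd values).1 ⟨b.coord i, rfl⟩
  choose k hk using dvd_coord
  let u := ∑ i ∈ (b.repr x).support, k i • b i
  have hxu : x = m • u := by
    rw [← b.linearCombination_repr x, Finsupp.linearCombination_apply, Finsupp.sum,
      Finset.smul_sum]
    simp only [hk, mul_smul]
  have hm : m ≠ 0 := fun hm => hx (by rw [hxu, hm, zero_smul])
  refine ⟨m, u, g, hxu, mul_left_cancel₀ hm ?_⟩
  rw [← smul_eq_mul, ← map_smul, ← hxu, mul_one]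
  exact hg

theorem exists_add_eq_and_dual_sub_eq_one (parity : ∀ a : R, Even a ∨ Odd a)
    {σ : End R M} (hσ : Function.Involutive σ) {x : M} (hx : ¬Even (x - σ x)) :
    ∃ (z : M) (h : Dual R M), z + σ z = x + σ x ∧ h (z - σ z) = 1 := by
  have x_sub_ne_zero : x - σ x ≠ 0 := fun h => hx (h ▸ Even.zero)
  obtain ⟨n, v, h, hv, hhv⟩ := exists_eq_smul_and_dual_eq_one (R := R) x_sub_ne_zero
  have n_ne_zero : n ≠ 0 := by
    rintro rfl
    exact x_sub_ne_zero (by rw [hv, zero_smul])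
  have hσv : σ v = -v := by
    apply smul_right_injective M n_ne_zero
    simp only [smul_neg, ← map_smul, ← hv, map_sub, hσ x, neg_sub]
  have not_even_n : ¬Even n := by
    rintro ⟨k, rfl⟩
    exact hx ⟨k • v, by rw [hv, add_smul]⟩
  obtain ⟨k, rfl⟩ := (parity n).resolve_left not_even_n
  have hσz : σ (x - k • v) = σ x + k • v := by
    rw [map_sub, map_smul, hσv, smul_neg, sub_neg_eq_add]
  have z_sub : x - k • v - σ (x - k • v) = v := by
    rw [hσz]
    linear_combination (norm := module) hv
  exact ⟨x - k • v, h, by rw [hσz]; abel, by rw [z_sub, hhv]⟩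

theorem exists_dual_eq_one_and_apply_eq_zero_of_not_even (parity : ∀ a : R, Even a ∨ Odd a)
    {σ : End R M} (hσ : Function.Involutive σ) {x : M} (hx : ¬Even (x + σ x)) :
    ∃ (z : M) (f : Dual R M), f z = 1 ∧ f (σ z) = 0 := by
  obtain ⟨y, g, hy, hg⟩ := exists_add_eq_and_dual_sub_eq_one parity (σ := -σ) (x := x)
    (fun y => by simp [hσ y]) (by simpa using hx)
  simp only [LinearMap.neg_apply, ← sub_eq_add_neg, sub_neg_eq_add] at hy hg
  have not_even_sub : ¬Even (y - σ y) := by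
    contrapose hx
    rw [hy] at hx
    rw [show x + σ x = x - σ x + (σ x + σ x) by abel]
    exact hx.add (Even.add_self _)
  obtain ⟨z, h, hz, hh⟩ := exists_add_eq_and_dual_sub_eq_one parity hσ not_even_sub
  exact ⟨z, exists_dual_eq_one_and_apply_eq_zero hσ (hz ▸ hg) hh⟩

variable [Module.Finite R M]

theorem hasStandardForm_of_forall_even [NeZero (2 : R)] {σ : End R M}
    (hσ : Function.Involutive σ) (heven : ∀ x, Even (x + σ x)) : HasStandardForm σ := by
  let K := σ.eigenspace 1
  let L := σ.eigenspace (-1)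
  let split : (K × L) ≃ₗ[R] M :=
    Submodule.prodEquivOfIsCompl K L (isCompl_eigenspace_one_neg_one hσ heven)
  have hsplit (p : K × L) : σ (split p) = split (p.1, -p.2) := by
    simp [split, End.mem_eigenspace_iff.1 p.1.2, End.mem_eigenspace_iff.1 p.2.2]
  refine ⟨finrank R K, finrank R L, 0, split.symm.trans <|
    (finBasis R K).equivFun.prodCongr <| (finBasis R L).equivFun.trans
      (LinearEquiv.prodUnique).symm, fun x => ?_⟩
  obtain ⟨p, rfl⟩ := split.surjective x
  rw [hsplit]
  ext i
  · simp
  · simp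
  all_goals exact i.elim0

end PID

theorem stmt1_general {R M : Type*} [CommRing R] [IsDomain R] [IsPrincipalIdealRing R]
    [NeZero (2 : R)] (parity : ∀ a : R, Even a ∨ Odd a)
    [AddCommGroup M] [Module R M] [Module.Free R M] [Module.Finite R M]
    (σ : End R M) (hσ : Function.Involutive σ) : HasStandardForm σ := by
  induction hn : finrank R M using Nat.strong_induction_on generalizing M with
  | h n ih =>
    by_cases heven : ∀ x, Even (x + σ x)
    · exact hasStandardForm_of_forall_even hσ heven
    · obtain ⟨x, hx⟩ := not_forall.1 heven
      obtain ⟨z, f, hz, hσz⟩ := exists_dual_eq_one_and_apply_eq_zero_of_not_even parity hσ hx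
      obtain ⟨N, τ, e, hτ, he⟩ := exists_equivariant_linearEquiv_swap_prod hσ hz hσz
      have finrank_lt : finrank R N < n := by
        rw [← hn, e.finrank_eq, finrank_prod, finrank_prod, finrank_self]
        omega
      exact (ih _ finrank_lt τ hτ rfl).of_swap_prod e he

/-- Every finitely generated free abelian group `Λ` equipped with an
involution `σ` decomposes as a direct sum of `ℤ/2`-submodules of three indecomposable
types: the trivial module `ℤ` (σ = id), the sign module `ℤ₋` (σ = -id), and the
regular module `R = ℤ²` with `σ (x, y) = (y, x)`.  Concretely: there exist `t c r : ℕ`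
and an additive isomorphism `e : Λ ≃+ (Fin t → ℤ) × (Fin c → ℤ) × (Fin r → ℤ × ℤ)`
intertwining `σ` with the model involution which is the identity on the first factor,
negation on the second, and coordinate swap on each `ℤ × ℤ` summand of the third. -/
theorem stmt1 (Λ : Type*) [AddCommGroup Λ] [Module.Free ℤ Λ] [Module.Finite ℤ Λ]
    (σ : Λ →+ Λ) (hσ : ∀ x, σ (σ x) = x) :
    ∃ (t c r : ℕ) (e : Λ ≃+ ((Fin t → ℤ) × (Fin c → ℤ) × (Fin r → ℤ × ℤ))),
      ∀ x : Λ, e (σ x) = ((e x).1, -(e x).2.1, fun i => ((e x).2.2 i).swap) := by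
  obtain ⟨t, c, r, e, he⟩ := stmt1_general Int.even_or_odd σ.toIntLinearMap hσ
  exact ⟨t, c, r, e.toAddEquiv, he⟩
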